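/- For every ε > 0 and every t > 0, the radial Eguchi–Hanson potential satisfies deriv ψ_ε t > 0 and deriv ψ_ε t + t·deriv (deriv ψ_ε) t > 0; this expresses the positivity (Kähler property) of the (1,1)-form i∂∂̄F_ε on (ℂ²∖{0})/±1. -/

import Mathlib

/-- The radial Eguchi–Hanson potential `ψ_ε(t)` in the variable `t = ‖z‖²`. -/
noncomputable def radialEH (ε : ℝ) (t : ℝ) : ℝ :=
  Real.sqrt (t ^ 2 + ε ^ 2) + ε * Real.log (t / (Real.sqrt (t ^ 2 + ε ^ 2) + ε))

theorem radialEH_hasDerivAt (ε t : ℝ) (hε : 0 < ε) (ht : 0 < t) :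
    HasDerivAt (radialEH ε) (Real.sqrt (t ^ 2 + ε ^ 2) / t) t := by
  have hp : 0 < t ^ 2 + ε ^ 2 := by positivity
  have hs : 0 < Real.sqrt (t ^ 2 + ε ^ 2) := Real.sqrt_pos.2 hp
  have hsq : Real.sqrt (t ^ 2 + ε ^ 2) ^ 2 = t ^ 2 + ε ^ 2 := Real.sq_sqrt hp.le
  have h1 : HasDerivAt (fun x : ℝ => Real.sqrt (x ^ 2 + ε ^ 2))
      (t / Real.sqrt (t ^ 2 + ε ^ 2)) t := by
    have := ((hasDerivAt_pow 2 t).add_const (ε ^ 2)).sqrt hp.ne'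
    convert this using 1
    norm_num
    field_simp
  have hd : Real.sqrt (t ^ 2 + ε ^ 2) + ε ≠ 0 := by positivity
  have h2 := (((hasDerivAt_id t).div (h1.add_const ε) hd).log
    (by simp only [id, Pi.div_apply]; positivity)).const_mul ε
  have h3 := h1.add h2
  refine HasDerivAt.congr_deriv (f := fun t => Real.sqrt (t ^ 2 + ε ^ 2) + ε * Real.log (t / (Real.sqrt (t ^ 2 + ε ^ 2) + ε))) h3 ?_
  simp only [id, Pi.div_apply]
  generalize Real.sqrt (t ^ 2 + ε ^ 2) = s at *
  field_simp
  have : t ^ 2 = s ^ 2 - ε ^ 2 := by linarith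
  rw [this]
  ring

theorem radialEH_kaehler_positivity (ε t : ℝ) (hε : 0 < ε) (ht : 0 < t) :
    0 < deriv (radialEH ε) t ∧
      0 < deriv (radialEH ε) t + t * deriv (deriv (radialEH ε)) t := by
  have hp : 0 < t ^ 2 + ε ^ 2 := by positivity
  have hs : 0 < Real.sqrt (t ^ 2 + ε ^ 2) := Real.sqrt_pos.2 hp
  have h1 : HasDerivAt (fun x : ℝ => Real.sqrt (x ^ 2 + ε ^ 2))
      (t / Real.sqrt (t ^ 2 + ε ^ 2)) t := by
    have := ((hasDerivAt_pow 2 t).add_const (ε ^ 2)).sqrt hp.ne'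
    convert this using 1
    norm_num
    field_simp
  have he : deriv (radialEH ε) =ᶠ[nhds t] fun x => Real.sqrt (x ^ 2 + ε ^ 2) / x := by
    filter_upwards [lt_mem_nhds ht] with x hx
    exact (radialEH_hasDerivAt ε x hε hx).deriv
  have h2 : deriv (deriv (radialEH ε)) t = _ :=
    he.deriv_eq.trans (h1.div (hasDerivAt_id t) ht.ne').deriv
  rw [h2, (radialEH_hasDerivAt ε t hε ht).deriv]
  refine ⟨by positivity, ?_⟩
  have : Real.sqrt (t ^ 2 + ε ^ 2) / t + t * ((t / Real.sqrt (t ^ 2 + ε ^ 2) * id t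
      - Real.sqrt (t ^ 2 + ε ^ 2) * 1) / id t ^ 2) = t / Real.sqrt (t ^ 2 + ε ^ 2) := by
    simp only [id]
    field_simp
    ring
  rw [this]
  positivity
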